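/- arXiv:1712.08859 — 4 statements merged into one kernel-verified Lean document; each statement's English description precedes it below -/
import Mathlib

section
/- Let f : ℝ^n → ℝ be differentiable with L-Lipschitz continuous gradient for some L > 0, and let x* ∈ ℝ^n with x* ≥ 0 componentwise. Let Z = { i : x*_i = 0 }, assume Z is nonempty and the nondegeneracy condition ∂_i f(x*) > 0 holds for all i ∈ Z, and set δ = min_{i ∈ Z} ∂_i f(x*). Then for any x ∈ ℝ^n with ‖x − x*‖ ≤ δ/(2L) and any i ∈ Z, the projected coordinate gradient step with step-size 1/L lands exactly at zero: max(0, x_i − (1/L)·∂_i f(x)) = 0. -/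
theorem stmt6 (n : ℕ) (f : EuclideanSpace ℝ (Fin n) → ℝ) (hdiff : Differentiable ℝ f)
    (L : ℝ) (hL : 0 < L)
    (hlip : ∀ x y : EuclideanSpace ℝ (Fin n), ‖gradient f x - gradient f y‖ ≤ L * ‖x - y‖)
    (xstar : EuclideanSpace ℝ (Fin n)) (hpos : ∀ i, 0 ≤ xstar i)
    (Z : Finset (Fin n)) (hZ : ∀ i, i ∈ Z ↔ xstar i = 0) (hZne : Z.Nonempty)
    (hnd : ∀ i ∈ Z, 0 < gradient f xstar i)
    (δ : ℝ) (hδ : δ = Z.inf' hZne (fun i => gradient f xstar i))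
    (x : EuclideanSpace ℝ (Fin n)) (hx : ‖x - xstar‖ ≤ δ / (2 * L))
    (i : Fin n) (hi : i ∈ Z) :
    max 0 (x i - (1 / L) * gradient f x i) = 0 := by
  have h1 : |x i - xstar i| ≤ ‖x - xstar‖ := by
    simpa using PiLp.norm_apply_le (x - xstar) i
  have h2 : |gradient f x i - gradient f xstar i| ≤ ‖gradient f x - gradient f xstar‖ := by
    simpa using PiLp.norm_apply_le (gradient f x - gradient f xstar) i
  have h3 : δ ≤ gradient f xstar i := by
    rw [hδ]
    exact Finset.inf'_le (fun i => gradient f xstar i) hi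
  have h4 : xstar i = 0 := (hZ i).1 hi
  have h5 := hlip x xstar
  have h6 : L * ‖x - xstar‖ ≤ δ / 2 := by
    calc L * ‖x - xstar‖ ≤ L * (δ / (2 * L)) := by gcongr
      _ = δ / 2 := by field_simp
  have h7 : L * x i ≤ L * ‖x - xstar‖ := by
    have h8 : x i ≤ ‖x - xstar‖ := by
      have := (abs_le.1 h1).2
      linarith
    gcongr
  have h9 := (abs_le.1 h2).1
  apply max_eq_left
  have h10 : x i ≤ gradient f x i / L := by
    rw [le_div_iff₀ hL]
    linarith
  have h11 : (1 / L) * gradient f x i = gradient f x i / L := by ring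
  linarith
end

section
/- Let f : ℝ^n → ℝ be differentiable with L-Lipschitz continuous gradient for some L > 0, let λ > 0, and let x* ∈ ℝ^n. Let Z = { i : x*_i = 0 }, assume Z is nonempty and the nondegeneracy condition |∂_i f(x*)| < λ holds for all i ∈ Z, and set δ = λ − max_{i ∈ Z} |∂_i f(x*)|. Then for any x ∈ ℝ^n with ‖x − x*‖ ≤ δ/(2L) and any i ∈ Z, one has |x_i − (1/L)·∂_i f(x)| ≤ λ/L; consequently the soft-threshold step with threshold λ/L applied to coordinate i yields exactly zero. -/
theorem stmt7 (n : ℕ) (f : EuclideanSpace ℝ (Fin n) → ℝ) (hdiff : Differentiable ℝ f)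
    (L : ℝ) (hL : 0 < L) (lam : ℝ) (hlam : 0 < lam)
    (hlip : ∀ x y : EuclideanSpace ℝ (Fin n), ‖gradient f x - gradient f y‖ ≤ L * ‖x - y‖)
    (xstar : EuclideanSpace ℝ (Fin n))
    (Z : Finset (Fin n)) (hZ : ∀ i, i ∈ Z ↔ xstar i = 0) (hZne : Z.Nonempty)
    (hnd : ∀ i ∈ Z, |gradient f xstar i| < lam)
    (δ : ℝ) (hδ : δ = lam - Z.sup' hZne (fun i => |gradient f xstar i|))
    (x : EuclideanSpace ℝ (Fin n)) (hx : ‖x - xstar‖ ≤ δ / (2 * L))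
    (i : Fin n) (hi : i ∈ Z) :
    |x i - (1 / L) * gradient f x i| ≤ lam / L ∧
      Real.sign (x i - (1 / L) * gradient f x i) *
        max (|x i - (1 / L) * gradient f x i| - lam / L) 0 = 0 := by
  have key : |x i - (1 / L) * gradient f x i| ≤ lam / L := by
    have h1 : |gradient f xstar i| ≤ lam - δ := by
      have := Finset.le_sup' (fun i => |gradient f xstar i|) hi
      simp only at this
      linarith
    have h2 : |x i| ≤ ‖x - xstar‖ := by
      have h := PiLp.norm_apply_le (x - xstar) i
      rw [PiLp.sub_apply, (hZ i).1 hi, sub_zero, Real.norm_eq_abs] at h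
      exact h
    have h3 : |gradient f x i - gradient f xstar i| ≤ L * ‖x - xstar‖ := by
      have h := PiLp.norm_apply_le (gradient f x - gradient f xstar) i
      rw [PiLp.sub_apply, Real.norm_eq_abs] at h
      exact h.trans (hlip x xstar)
    have h4 : L * ‖x - xstar‖ ≤ δ / 2 := by
      rw [le_div_iff₀ (by positivity)] at hx
      linarith
    have h5 : L * |x i| ≤ δ / 2 := (mul_le_mul_of_nonneg_left h2 hL.le).trans h4
    have h6 : L * |x i - (1 / L) * gradient f x i| = |L * x i - gradient f x i| := by
      rw [← abs_of_pos hL, ← abs_mul, abs_of_pos hL]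
      congr 1
      field_simp
    rw [le_div_iff₀ hL, mul_comm, h6]
    have h7 : |L * x i| ≤ δ / 2 := by rwa [abs_mul, abs_of_pos hL]
    have h8 := h3.trans h4
    rw [abs_le] at *
    constructor <;> linarith [h1.1, h1.2, h7.1, h7.2, h8.1, h8.2]
  refine ⟨key, ?_⟩
  rw [max_eq_right (by linarith), mul_zero]
end

section
/- Let f : ℝ^n → ℝ be differentiable with L-Lipschitz continuous gradient for some L > 0, and let x* ∈ ℝ^n with x* ≥ 0 componentwise, Z = { i : x*_i = 0 }, and nondegeneracy ∂_i f(x*) > 0 for all i ∈ Z. Suppose the sequence (x^k) is generated by a coordinate-wise projected gradient method: for each k there is a coordinate i_k such that x^{k+1}_j = x^k_j for all j ≠ i_k and x^{k+1}_{i_k} = max(0, x^k_{i_k} − (1/L)·∂_{i_k} f(x^k)). If x^k → x*, then there exists a finite K such that x^k_i = 0 for all k ≥ K and all i ∈ Z. -/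
theorem stmt8 (n : ℕ) (f : EuclideanSpace ℝ (Fin n) → ℝ) (hdiff : Differentiable ℝ f)
    (L : ℝ) (hL : 0 < L)
    (hlip : ∀ x y : EuclideanSpace ℝ (Fin n), ‖gradient f x - gradient f y‖ ≤ L * ‖x - y‖)
    (xstar : EuclideanSpace ℝ (Fin n)) (hpos : ∀ i, 0 ≤ xstar i)
    (hnd : ∀ i, xstar i = 0 → 0 < gradient f xstar i)
    (x : ℕ → EuclideanSpace ℝ (Fin n)) (isel : ℕ → Fin n)
    (hupd1 : ∀ (k : ℕ) (j : Fin n), j ≠ isel k → x (k + 1) j = x k j)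
    (hupd2 : ∀ k : ℕ,
      x (k + 1) (isel k) = max 0 (x k (isel k) - (1 / L) * gradient f (x k) (isel k)))
    (hconv : Filter.Tendsto x Filter.atTop (nhds xstar)) :
    ∃ K : ℕ, ∀ k, K ≤ k → ∀ i, xstar i = 0 → x k i = 0 := by
  have hg : Continuous (gradient f) := by
    have : LipschitzWith ⟨L, hL.le⟩ (gradient f) := by
      apply LipschitzWith.of_dist_le_mul
      intro a b
      rw [dist_eq_norm, dist_eq_norm]
      exact hlip a b
    exact this.continuous
  have hc : ∀ i : Fin n, Continuous (fun y : EuclideanSpace ℝ (Fin n) => y i) := by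
    intro i
    fun_prop
  have key : ∀ i, ∀ᶠ k in Filter.atTop, xstar i = 0 → x k i = 0 := by
    intro i
    by_cases hi : xstar i = 0
    swap
    · exact Filter.Eventually.of_forall (fun k h => absurd h hi)
    have h1 : Filter.Tendsto (fun k => x k i) Filter.atTop (nhds (xstar i)) :=
      ((hc i).tendsto xstar).comp hconv
    have h2 : Filter.Tendsto (fun k => gradient f (x k) i) Filter.atTop
        (nhds (gradient f xstar i)) :=
      (((hc i).comp hg).tendsto xstar).comp hconv
    have h3 := h1.sub (h2.const_mul (1 / L))
    have hneg : xstar i - 1 / L * gradient f xstar i < 0 := by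
      have := mul_pos (one_div_pos.mpr hL) (hnd i hi)
      linarith
    obtain ⟨K, hK⟩ := Filter.eventually_atTop.mp (h3.eventually_lt_const hneg)
    have hsel : ∀ k, K ≤ k → isel k = i → x (k + 1) i = 0 := by
      intro k hk hki
      have h := hupd2 k
      rw [hki] at h
      rw [h]
      exact max_eq_left (hK k hk).le
    by_cases hex : ∃ m, K ≤ m ∧ isel m = i
    · obtain ⟨m, hm, hmi⟩ := hex
      refine Filter.eventually_atTop.mpr ⟨m + 1, fun k hk _ => ?_⟩
      induction k, hk using Nat.le_induction with
      | base => exact hsel m hm hmi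
      | succ k hk ih =>
        by_cases h : isel k = i
        · exact hsel k (by omega) h
        · rw [hupd1 k i (Ne.symm h)]
          exact ih
    · push Not at hex
      have hconst : ∀ k, K ≤ k → x k i = x K i := by
        intro k hk
        induction k, hk using Nat.le_induction with
        | base => rfl
        | succ k hk ih => rw [hupd1 k i (Ne.symm (hex k hk)), ih]
      have h4 : Filter.Tendsto (fun k => x k i) Filter.atTop (nhds (x K i)) :=
        tendsto_const_nhds.congr' (Filter.eventually_atTop.mpr
          ⟨K, fun k hk => (hconst k hk).symm⟩)
      have h5 := tendsto_nhds_unique h4 h1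
      exact Filter.eventually_atTop.mpr ⟨K, fun k hk h => by rw [hconst k hk, h5, h]⟩
  exact Filter.eventually_atTop.mp (Filter.eventually_all.mpr key)
end

section
/- Let f : ℝ^n → ℝ be differentiable with L-Lipschitz continuous gradient for some L > 0, let λ > 0, and let x* ∈ ℝ^n with Z = { i : x*_i = 0 } and nondegeneracy |∂_i f(x*)| < λ for all i ∈ Z. Suppose the sequence (x^k) is generated by a coordinate-wise proximal gradient method: for each k there is a coordinate i_k such that x^{k+1}_j = x^k_j for all j ≠ i_k, and x^{k+1}_{i_k} = sign(z^k)·max(|z^k| − λ/L, 0) where z^k = x^k_{i_k} − (1/L)·∂_{i_k} f(x^k). If x^k → x*, then there exists a finite K such that x^k_i = 0 for all k ≥ K and all i ∈ Z. -/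
theorem stmt9 (n : ℕ) (f : EuclideanSpace ℝ (Fin n) → ℝ) (hdiff : Differentiable ℝ f)
    (L : ℝ) (hL : 0 < L) (lam : ℝ) (hlam : 0 < lam)
    (hlip : ∀ x y : EuclideanSpace ℝ (Fin n), ‖gradient f x - gradient f y‖ ≤ L * ‖x - y‖)
    (xstar : EuclideanSpace ℝ (Fin n))
    (hnd : ∀ i, xstar i = 0 → |gradient f xstar i| < lam)
    (x : ℕ → EuclideanSpace ℝ (Fin n)) (isel : ℕ → Fin n)
    (hupd1 : ∀ (k : ℕ) (j : Fin n), j ≠ isel k → x (k + 1) j = x k j)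
    (hupd2 : ∀ k : ℕ,
      x (k + 1) (isel k) =
        Real.sign (x k (isel k) - (1 / L) * gradient f (x k) (isel k)) *
          max (|x k (isel k) - (1 / L) * gradient f (x k) (isel k)| - lam / L) 0)
    (hconv : Filter.Tendsto x Filter.atTop (nhds xstar)) :
    ∃ K : ℕ, ∀ k, K ≤ k → ∀ i, xstar i = 0 → x k i = 0 := by
  have hgt : Filter.Tendsto (fun k => gradient f (x k)) Filter.atTop (nhds (gradient f xstar)) := by
    rw [tendsto_iff_norm_sub_tendsto_zero] at hconv ⊢
    have h2 := hconv.const_mul L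
    rw [mul_zero] at h2
    exact squeeze_zero (fun k => norm_nonneg _) (fun k => hlip _ _) h2
  have hcoord : ∀ (i : Fin n) (u : ℕ → EuclideanSpace ℝ (Fin n)) (v : EuclideanSpace ℝ (Fin n)),
      Filter.Tendsto u Filter.atTop (nhds v) →
      Filter.Tendsto (fun k => u k i) Filter.atTop (nhds (v i)) := by
    intro i u v h
    have hc : Continuous (fun w : EuclideanSpace ℝ (Fin n) => w i) := by fun_prop
    exact (hc.tendsto v).comp h
  have key : ∀ i : Fin n, ∀ᶠ k in Filter.atTop, xstar i = 0 → x k i = 0 := by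
    intro i
    by_cases hi : xstar i = 0
    swap
    · exact Filter.Eventually.of_forall fun k h => absurd h hi
    have hx := hcoord i _ _ hconv
    have hz := (hx.sub ((hcoord i _ _ hgt).const_mul (1 / L))).abs
    have hlt : |xstar i - 1 / L * gradient f xstar i| < lam / L := by
      rw [hi, zero_sub, abs_neg, abs_mul, abs_of_pos (by positivity : 0 < 1 / L), one_div,
        inv_mul_eq_div]
      exact div_lt_div_of_pos_right (hnd i hi) hL
    obtain ⟨K, hK⟩ := Filter.eventually_atTop.1 (hz.eventually_lt_const hlt)
    have hstep : ∀ k, K ≤ k → x (k + 1) i = 0 ∨ x (k + 1) i = x k i := by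
      intro k hk
      by_cases h : i = isel k
      · left
        have h1 := hK k hk
        have h2 := hupd2 k
        rw [← h] at h2
        rw [h2, max_eq_right (by linarith), mul_zero]
      · right
        exact hupd1 k i h
    by_cases hex : ∃ k0, K ≤ k0 ∧ x k0 i = 0
    · obtain ⟨k0, hk0, h0⟩ := hex
      refine Filter.eventually_atTop.2 ⟨k0, fun k hk _ => ?_⟩
      induction k, hk using Nat.le_induction with
      | base => exact h0
      | succ m hm ih =>
        rcases hstep m (hk0.trans hm) with h | h
        · exact h
        · rw [h, ih]
    · exfalso
      push Not at hex
      have hconst : ∀ k, K ≤ k → x k i = x K i := by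
        intro k hk
        induction k, hk using Nat.le_induction with
        | base => rfl
        | succ m hm ih =>
          rcases hstep m hm with h | h
          · exact absurd h (hex _ (by omega))
          · rw [h, ih]
      have hlim : Filter.Tendsto (fun k => x k i) Filter.atTop (nhds (x K i)) :=
        tendsto_const_nhds.congr' (Filter.eventually_atTop.2 ⟨K, fun k hk => (hconst k hk).symm⟩)
      exact hex K le_rfl ((tendsto_nhds_unique hlim hx).trans hi)
  obtain ⟨K, hK⟩ := Filter.eventually_atTop.1 (Filter.eventually_all.2 key)
  exact ⟨K, fun k hk i => hK k hk i⟩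
end
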